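/- Let p be a prime, n, m, l ≥ 1, R = GR(p^n,m) = (ZMod (p^n))[X]/(f) for a monic basic irreducible f of degree m, ρ ∈ R[X] monic of degree l with reduction modulo (p) irreducible over R/(p), and S = R[X]/(ρ). If γ is a unit of S of multiplicative order p^{ml} − 1, then the element α := γ^{(p^{ml} − 1)/(p^m − 1)} lies in the image of the algebra map R → S, has multiplicative order exactly p^m − 1, and its image in the residue field S/(p) generates multiplicatively the subfield of p^m elements. -/

import Mathlib

open Polynomial in
theorem aux_max {A : Type*} [CommRing A] (I : Ideal A) [hI : I.IsMaximal] (g : A[X]) (hg : g.Monic)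
    (hirr : Irreducible (g.map (Ideal.Quotient.mk I))) :
    (I.map (AdjoinRoot.of g)).IsMaximal ∧
    Nat.card (AdjoinRoot g ⧸ I.map (AdjoinRoot.of g)) = Nat.card (A ⧸ I) ^ g.natDegree := by
  letI : Field (A ⧸ I) := Ideal.Quotient.field I
  haveI : Nontrivial (A ⧸ I) := inferInstance
  have e := (AdjoinRoot.quotEquivQuotMap g I).toRingEquiv
  constructor
  · apply Ideal.Quotient.maximal_of_isField
    have : (Ideal.span {g.map (Ideal.Quotient.mk I)}).IsMaximal :=
      PrincipalIdealRing.isMaximal_of_irreducible hirr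
    exact MulEquiv.isField
      ((Ideal.Quotient.maximal_ideal_iff_isField_quotient _).1 this) e.toMulEquiv
  · rw [Nat.card_congr e.toEquiv, ← hg.natDegree_map (Ideal.Quotient.mk I),
      ← finrank_quotient_span_eq_natDegree]
    have : Module.Finite (A ⧸ I) ((A ⧸ I)[X] ⧸ Ideal.span {g.map (Ideal.Quotient.mk I)}) :=
      (hg.map (Ideal.Quotient.mk I)).finite_adjoinRoot
    exact Module.natCard_eq_pow_finrank

open Polynomial in
theorem aux_roots {k K : Type*} [Field k] [CommRing K] [IsDomain K] (g : k →+* K) (q : ℕ)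
    (hq : 1 < q) (hk : Nat.card k = q) (a : K) (ha : a ^ q = a) : a ∈ Set.range g := by
  classical
  have : Finite k := Nat.finite_of_card_ne_zero (by omega)
  have := Fintype.ofFinite k
  have hk' : Fintype.card k = q := by rw [← hk, Nat.card_eq_fintype_card]
  have hdeg : (X ^ q - X : K[X]).natDegree = q := by
    rw [natDegree_sub_eq_left_of_natDegree_lt, natDegree_X_pow]
    rw [natDegree_X_pow, natDegree_X]
    exact hq
  have hne : (X ^ q - X : K[X]) ≠ 0 := by
    intro h
    rw [h, natDegree_zero] at hdeg
    omega
  have hsub : Finset.univ.image g ⊆ (X ^ q - X : K[X]).roots.toFinset := by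
    intro x hx
    obtain ⟨y, -, rfl⟩ := Finset.mem_image.1 hx
    simp only [Multiset.mem_toFinset, mem_roots hne, IsRoot.def, eval_sub, eval_pow, eval_X]
    rw [← map_pow, ← hk', FiniteField.pow_card, sub_self]
  have heq := Finset.eq_of_subset_of_card_le hsub (by
    rw [Finset.card_image_of_injective _ g.injective, Finset.card_univ, hk']
    exact (Multiset.toFinset_card_le _).trans ((card_roots' _).trans hdeg.le))
  have : a ∈ (X ^ q - X : K[X]).roots.toFinset := by
    simp [mem_roots hne, ha]
  rw [← heq] at this
  obtain ⟨y, -, rfl⟩ := Finset.mem_image.1 this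
  exact ⟨y, rfl⟩

theorem aux_core {R S : Type*} [CommRing R] [CommRing S] (φ : R →+* S) (p n m : ℕ)
    (hp : p.Prime) (hm : 0 < m) (hpn : (p : S) ^ n = 0)
    (hR : (Ideal.span {(p : R)}).IsMaximal) (hS : (Ideal.span {(p : S)}).IsMaximal)
    (hcard : Nat.card (R ⧸ Ideal.span {(p : R)}) = p ^ m)
    (α : Sˣ) (hα : orderOf α = p ^ m - 1) :
    (α : S) ∈ Set.range φ ∧
    ∃ F : Subring (S ⧸ Ideal.span {(p : S)}),
      (F : Set (S ⧸ Ideal.span {(p : S)})) =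
        {0} ∪ Set.range (fun i : ℕ => (Ideal.Quotient.mk (Ideal.span {(p : S)}) (α : S)) ^ i) ∧
      Nat.card F = p ^ m := by
  letI : Field (R ⧸ Ideal.span {(p : R)}) := Ideal.Quotient.field _
  have hdom : IsDomain (S ⧸ Ideal.span {(p : S)}) := by
    have := hS.isPrime
    infer_instance
  have hq : 1 < p ^ m := Nat.one_lt_pow hm.ne' hp.one_lt
  let g : R ⧸ Ideal.span {(p : R)} →+* S ⧸ Ideal.span {(p : S)} :=
    Ideal.quotientMap _ φ (by
      rw [Ideal.span_singleton_le_iff_mem, Ideal.mem_comap, map_natCast]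
      exact Ideal.mem_span_singleton_self _)
  have hαq : α ^ (p ^ m) = α := by
    have h : p ^ m = orderOf α + 1 := by omega
    rw [h, pow_succ, pow_orderOf_eq_one, one_mul]
  have hαk : ∀ k, α ^ ((p ^ m) ^ k) = α := by
    intro k
    induction k with
    | zero => simp
    | succ k ih => rw [pow_succ, pow_mul, ih, hαq]
  have hlift : ∀ x y : S, (p : S) ∣ x - y → x ^ ((p ^ m) ^ n) = y ^ ((p ^ m) ^ n) := by
    intro x y h
    have h1 := dvd_sub_pow_of_dvd_sub h n
    rw [pow_succ, hpn, zero_mul, zero_dvd_iff, sub_eq_zero] at h1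
    have h2 : (p ^ m) ^ n = p ^ n * p ^ (m * n - n) := by
      rw [← pow_mul, ← pow_add, Nat.add_sub_cancel' (Nat.le_mul_of_pos_left n hm)]
    rw [h2, pow_mul, h1, ← pow_mul]
  set a := Ideal.Quotient.mk (Ideal.span {(p : S)}) (α : S) with ha
  have haq : a ^ (p ^ m) = a := by
    rw [ha, ← map_pow, ← Units.val_pow_eq_pow_val, hαq]
  have ha0 : a ≠ 0 := (α.isUnit.map (Ideal.Quotient.mk (Ideal.span {(p : S)}))).ne_zero
  obtain ⟨y, hy⟩ := aux_roots g _ hq hcard a haq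
  have horder : orderOf a = p ^ m - 1 := by
    rw [← hα]
    apply Nat.dvd_antisymm
    · apply orderOf_dvd_of_pow_eq_one
      rw [ha, ← map_pow, ← Units.val_pow_eq_pow_val, pow_orderOf_eq_one, Units.val_one, map_one]
    · apply orderOf_dvd_of_pow_eq_one
      have h := pow_orderOf_eq_one a
      rw [ha, ← map_pow, ← map_one (Ideal.Quotient.mk (Ideal.span {(p : S)})),
        Ideal.Quotient.mk_eq_mk_iff_sub_mem, Ideal.mem_span_singleton] at h
      have h2 := hlift _ _ h
      rw [one_pow, ← pow_mul, mul_comm, pow_mul, ← Units.val_pow_eq_pow_val, hαk,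
        ← Units.val_pow_eq_pow_val] at h2
      exact Units.ext h2
  refine ⟨?_, g.range, ?_, ?_⟩
  · obtain ⟨r, rfl⟩ := Ideal.Quotient.mk_surjective y
    refine ⟨r ^ ((p ^ m) ^ n), ?_⟩
    rw [map_pow]
    have : g (Ideal.Quotient.mk _ r) = Ideal.Quotient.mk _ (φ r) := rfl
    rw [this, ha, Ideal.Quotient.mk_eq_mk_iff_sub_mem, Ideal.mem_span_singleton] at hy
    rw [hlift _ _ hy, ← Units.val_pow_eq_pow_val, hαk]
  · have : Finite (R ⧸ Ideal.span {(p : R)}) := Nat.finite_of_card_ne_zero (by omega)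
    symm
    apply Set.eq_of_subset_of_ncard_le _ _ (by
      rw [RingHom.coe_range]; exact Set.finite_range g)
    · rintro x (rfl | ⟨i, rfl⟩)
      · exact zero_mem _
      · exact ⟨y ^ i, by rw [map_pow, hy]⟩
    · rw [RingHom.coe_range, ← Set.image_univ, Set.ncard_image_of_injective _ g.injective,
        Set.ncard_univ, hcard]
      have hfin : ({0} ∪ Set.range (fun i : ℕ => a ^ i)).Finite := by
        apply (Set.finite_range g).subset
        rintro x (rfl | ⟨i, rfl⟩)
        · exact ⟨0, map_zero g⟩
        · exact ⟨y ^ i, by rw [map_pow, hy]⟩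
      have hle : (insert 0 ((fun i : ℕ => a ^ i) '' Set.Iio (orderOf a))).ncard ≤
          ({0} ∪ Set.range (fun i : ℕ => a ^ i)).ncard := by
        apply Set.ncard_le_ncard _ hfin
        rintro x (rfl | ⟨i, -, rfl⟩)
        · exact Or.inl rfl
        · exact Or.inr ⟨i, rfl⟩
      refine le_trans ?_ hle
      rw [Set.ncard_insert_of_notMem _ ((Set.finite_Iio _).image _),
        Set.InjOn.ncard_image pow_injOn_Iio_orderOf, horder, Set.ncard_Iio_nat]
      · omega
      · rintro ⟨i, -, hi⟩
        exact pow_ne_zero i ha0 hi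
  · rw [← hcard]
    exact (Nat.card_congr (RingEquiv.ofBijective g.rangeRestrict
      ⟨(RingHom.injective _), g.rangeRestrict_surjective⟩).toEquiv).symm

/-- Let `R = GR(p^n, m)` and `S = R[X]/(ρ) = GR(p^n, m*l)`. If `γ` is a
unit of `S` of multiplicative order `p^(m*l) - 1`, then `α := γ ^ ((p^(m*l)-1)/(p^m-1))`
lies in the image of `R → S`, has multiplicative order exactly `p^m - 1`, and its image in
the residue field `S/(p)` generates multiplicatively the subfield with `p^m` elements. -/
theorem galois_ring_subring_teichmuller_generator (p n m l : ℕ) (hp : p.Prime)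
    (hn : 0 < n) (hm : 0 < m) (hl : 0 < l)
    (f : Polynomial (ZMod (p ^ n))) (hf : f.Monic) (hdeg : f.natDegree = m)
    (hirr : Irreducible (f.map (ZMod.castHom (dvd_pow_self p hn.ne') (ZMod p))))
    (ρ : Polynomial (AdjoinRoot f)) (hρ : ρ.Monic) (hρdeg : ρ.natDegree = l)
    (hρirr : Irreducible
      (ρ.map (Ideal.Quotient.mk (Ideal.span {(p : AdjoinRoot f)}))))
    (γ : (AdjoinRoot ρ)ˣ) (hγ : orderOf γ = p ^ (m * l) - 1) :
    ((γ ^ ((p ^ (m * l) - 1) / (p ^ m - 1)) : (AdjoinRoot ρ)ˣ) : AdjoinRoot ρ) ∈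
        Set.range (algebraMap (AdjoinRoot f) (AdjoinRoot ρ)) ∧
    orderOf (γ ^ ((p ^ (m * l) - 1) / (p ^ m - 1))) = p ^ m - 1 ∧
    ∃ F : Subring (AdjoinRoot ρ ⧸ Ideal.span {(p : AdjoinRoot ρ)}),
      (F : Set (AdjoinRoot ρ ⧸ Ideal.span {(p : AdjoinRoot ρ)})) =
        {0} ∪ Set.range (fun i : ℕ =>
          (Ideal.Quotient.mk (Ideal.span {(p : AdjoinRoot ρ)})
            ((γ ^ ((p ^ (m * l) - 1) / (p ^ m - 1)) : (AdjoinRoot ρ)ˣ) : AdjoinRoot ρ)) ^ i) ∧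
      Nat.card F = p ^ m := by
  have : Fact p.Prime := ⟨hp⟩
  set c := ZMod.castHom (dvd_pow_self p hn.ne') (ZMod p) with hc
  have hcs : Function.Surjective c := ZMod.castHom_surjective _
  have hker : RingHom.ker c = Ideal.span {(p : ZMod (p ^ n))} := by
    have : NeZero (p ^ n) := ⟨pow_ne_zero _ hp.ne_zero⟩
    ext x
    obtain ⟨k, rfl⟩ := ZMod.natCast_zmod_surjective x
    rw [RingHom.mem_ker, map_natCast, ZMod.natCast_eq_zero_iff, Ideal.mem_span_singleton]
    constructor
    · intro h; exact_mod_cast Nat.cast_dvd_cast h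
    · intro h
      have h2 := map_dvd c h
      rw [map_natCast, map_natCast, ZMod.natCast_self, zero_dvd_iff] at h2
      exact (ZMod.natCast_eq_zero_iff _ _).1 h2
  let e : (ZMod (p ^ n) ⧸ Ideal.span {(p : ZMod (p ^ n))}) ≃+* ZMod p :=
    (Ideal.quotEquivOfEq hker.symm).trans (RingHom.quotientKerEquivOfSurjective hcs)
  have hmax : (Ideal.span {(p : ZMod (p ^ n))}).IsMaximal := by
    rw [← hker]; exact RingHom.ker_isMaximal_of_surjective c hcs
  have hirr' : Irreducible (f.map (Ideal.Quotient.mk (Ideal.span {(p : ZMod (p ^ n))}))) := by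
    rw [← MulEquiv.irreducible_iff (Polynomial.mapEquiv e)]
    have : Polynomial.mapEquiv e
        (f.map (Ideal.Quotient.mk (Ideal.span {(p : ZMod (p ^ n))}))) = f.map c := by
      rw [Polynomial.mapEquiv_apply, Polynomial.map_map]
      rfl
    rw [this]; exact hirr
  obtain ⟨h1, h2⟩ := aux_max _ f hf hirr'
  rw [Ideal.map_span, Set.image_singleton, map_natCast] at h1 h2
  rw [hdeg, Nat.card_congr e.toEquiv, Nat.card_zmod] at h2
  obtain ⟨h3, -⟩ := aux_max _ ρ hρ hρirr
  rw [Ideal.map_span, Set.image_singleton, map_natCast] at h3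
  have hpn : (p : AdjoinRoot ρ) ^ n = 0 := by
    have h : ((p ^ n : ℕ) : ZMod (p ^ n)) = 0 := ZMod.natCast_self _
    have h' := congrArg ((AdjoinRoot.of ρ).comp (AdjoinRoot.of f)) h
    rw [map_natCast, map_zero] at h'
    exact_mod_cast h'
  have hq : 1 < p ^ m := Nat.one_lt_pow hm.ne' hp.one_lt
  have hQ : 1 < p ^ (m * l) := Nat.one_lt_pow (Nat.mul_pos hm hl).ne' hp.one_lt
  have hdvd : p ^ m - 1 ∣ p ^ (m * l) - 1 := by
    rw [pow_mul]
    simpa using Nat.sub_dvd_pow_sub_pow (p ^ m) 1 l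
  have hord : orderOf (γ ^ ((p ^ (m * l) - 1) / (p ^ m - 1))) = p ^ m - 1 := by
    rw [orderOf_pow_of_dvd (Nat.div_pos (Nat.le_of_dvd (by omega) hdvd) (by omega)).ne'
      (by rw [hγ]; exact Nat.div_dvd_of_dvd hdvd), hγ, Nat.div_div_self hdvd (by omega)]
  obtain ⟨h4, h5⟩ := aux_core (algebraMap (AdjoinRoot f) (AdjoinRoot ρ)) p n m hp hm hpn h1 h3 h2
    _ hord
  exact ⟨h4, hord, h5⟩
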